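/- Let I_X be the ideal described in the context and let w be the weight vector given there. Then the monomial E₆·F₅₆·G₆ belongs to the initial ideal in_w(I_X), i.e., to the ideal generated by the initial forms in_w(g) of all nonzero g ∈ I_X. -/

import Mathlib

open MvPolynomial

noncomputable section

/-- The `w`-weight `⟨w, m⟩` of an exponent vector / monomial `m`. -/
def mWeight {σ : Type*} (w : σ → ℝ) (m : σ →₀ ℕ) : ℝ :=
  m.sum fun i e => w i * e

/-- The initial form `in_w(f)`: the sum of the terms of `f` whose `w`-weight is
minimal among all terms of `f` (min-convention, trivial valuation). -/
def initialForm {σ K : Type*} [CommRing K] (w : σ → ℝ) (f : MvPolynomial σ K) :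
    MvPolynomial σ K :=
  (f.support.filter fun m => ∀ m' ∈ f.support, mWeight w m ≤ mWeight w m').sum
    fun m => monomial m (f.coeff m)

/-- A polynomial is a monomial if it equals `c · x^m` for a single exponent
vector `m` and a nonzero coefficient `c`. -/
def IsMonomial {σ K : Type*} [CommRing K] (f : MvPolynomial σ K) : Prop :=
  ∃ (m : σ →₀ ℕ) (c : K), c ≠ 0 ∧ f = monomial m c

/-- The initial ideal `in_w(I)`: the ideal generated by the initial forms of
all nonzero elements of `I`. -/
def initialIdeal {σ K : Type*} [CommRing K] (w : σ → ℝ)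
    (I : Ideal (MvPolynomial σ K)) : Ideal (MvPolynomial σ K) :=
  Ideal.span {g | ∃ h ∈ I, h ≠ 0 ∧ g = initialForm w h}


/-! ### The Cox ring of a smooth cubic surface

The base field is `K = ℚ(d₁,…,d₆)` (generic parameters), and the polynomial
ring has the 27 variables `E₁,…,E₆`, `F_{ij}` (for unordered pairs
`{i,j} ⊆ {1,…,6}`), `G₁,…,G₆`, indexed by `Fin 6` (so indices are shifted
down by one). -/

/-- The field `ℚ(d₁,…,d₆)` of rational functions in six variables. -/
abbrev KK : Type := FractionRing (MvPolynomial (Fin 6) ℚ)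

/-- The parameter `d_i` as an element of `ℚ(d₁,…,d₆)`. -/
def dK (i : Fin 6) : KK := algebraMap (MvPolynomial (Fin 6) ℚ) KK (X i)

/-- Index type for the 27 variables: `Sum.inl i` is `E_i`, `Sum.inr (Sum.inl s)`
is `F_{ij}` for the unordered (off-diagonal) pair `s = {i,j}`, and
`Sum.inr (Sum.inr i)` is `G_i`. -/
def CVar : Type :=
  Fin 6 ⊕ ({s : Sym2 (Fin 6) // ¬ s.IsDiag} ⊕ Fin 6)

/-- The variable `E_i`. -/
def Ev (i : Fin 6) : MvPolynomial CVar KK := X (Sum.inl i)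

/-- The variable `F_{ij}` (junk value `0` when `i = j`). -/
def Fv (i j : Fin 6) : MvPolynomial CVar KK :=
  if h : ¬ (s(i, j) : Sym2 (Fin 6)).IsDiag
  then X (Sum.inr (Sum.inl ⟨s(i, j), h⟩)) else 0

/-- The variable `G_i`. -/
def Gv (i : Fin 6) : MvPolynomial CVar KK := X (Sum.inr (Sum.inr i))

/-- The trinomial
`T_{i,jkl} = (d_k−d_l)(d_i+d_k+d_l) E_j F_{ij} − (d_j−d_l)(d_i+d_j+d_l) E_k F_{ik}
 + (d_j−d_k)(d_i+d_j+d_k) E_l F_{il}`. -/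
def T (i j k l : Fin 6) : MvPolynomial CVar KK :=
  C ((dK k - dK l) * (dK i + dK k + dK l)) * (Ev j * Fv i j) -
    C ((dK j - dK l) * (dK i + dK j + dK l)) * (Ev k * Fv i k) +
    C ((dK j - dK k) * (dK i + dK j + dK k)) * (Ev l * Fv i l)

/-- The weight vector `w` from the paper (Theorem on cubic surfaces):
`E = (2,1,0,1,1,1)`, `F₁₃ = 2`, `F₂₃ = F₃₄ = F₃₅ = F₃₆ = 1`, all remaining
`F`- and `G`-weights `0` (indices shifted down by one). -/
def wCox : CVar → ℝ
  | Sum.inl i => ![2, 1, 0, 1, 1, 1] i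
  | Sum.inr (Sum.inl s) =>
      if s.val = s(0, 2) then 2
      else if s.val = s(1, 2) ∨ s.val = s(2, 3) ∨ s.val = s(2, 4) ∨ s.val = s(2, 5)
      then 1 else 0
  | Sum.inr (Sum.inr _) => 0

/-! ### Pinning down the 270 trinomial generators of `I_X`

The cubic surface `X` is the blow-up of `ℙ²` in the six points
`p_i = (1 : d_i : d_i³)`.  The (saturated) Cox ideal is the kernel of the map
sending each of the 27 variables to the corresponding section, realized below
inside the fraction field of `K[x,y,z,t₁,…,t₆]`:
`E_i ↦ t_i`, `F_{ij} ↦ ℓ_{ij}/((d_j−d_i) t_i t_j)` (where `ℓ_{ij}` is the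
equation of the line through `p_i, p_j`), and `G_i ↦ q_i / ∏_{m≠i} t_m`
(where `q_i` is the equation of the conic through the five points `p_m`,
`m ≠ i`).  The 270 trinomial generators of `I_X` (the ten trinomials
`T_{1,jkl}` together with their 260 translates under the Weyl group `W(E₆)`
acting on the 27 lines) are exactly the trinomial relations supported on
three reducible members of one of the 27 conic bundle classes; below they are
characterized as: elements of the kernel which are sums of three terms, each
a product of two distinct variables, all three of the same `ℤ⁷`-multidegree
(for the Picard grading `deg E_i = e_i`, `deg F_{ij} = e₀−e_i−e_j`,
`deg G_i = 2e₀−∑_{j≠i} e_j`). -/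

/-- Auxiliary polynomial ring `K[x,y,z,t₁,…,t₆]` (variables `0,1,2` are
`x,y,z`; variable `3+i` is `t_i`). -/
abbrev SRing : Type := MvPolynomial (Fin 9) KK

/-- Its fraction field. -/
abbrev LF : Type := FractionRing SRing

/-- The coordinates `x, y, z` in `LF`. -/
def xL (a : Fin 3) : LF := algebraMap SRing LF (X (a.castLE (by omega)))

/-- The variables `t_i` in `LF`. -/
def tL (i : Fin 6) : LF := algebraMap SRing LF (X (i.addNat 3))

/-- The parameter `d_i` in `LF`. -/
def dL (i : Fin 6) : LF := algebraMap SRing LF (C (dK i))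

/-- The linear form `ℓ_{ij}` cutting out the line through
`p_i = (1:d_i:d_i³)` and `p_j = (1:d_j:d_j³)`. -/
def ellL (i j : Fin 6) : LF :=
  Matrix.det !![xL 0, xL 1, xL 2; 1, dL i, dL i ^ 3; 1, dL j, dL j ^ 3]

/-- The `r`-th element (in increasing order) of `{1,…,6} ∖ {i}`. -/
def cpl (i : Fin 6) (r : Fin 5) : Fin 6 :=
  ((Finset.univ.erase i).orderIsoOfFin
    (by rw [Finset.card_erase_of_mem (Finset.mem_univ i)]; simp) r).val

/-- The quadratic form `q_i` cutting out the conic through the five points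
`p_m = (1:d_m:d_m³)`, `m ≠ i` (a 6×6 determinant in the conic monomials). -/
def conicL (i : Fin 6) : LF :=
  Matrix.det (Matrix.of fun r c : Fin 6 =>
    Fin.cases
      (![xL 0 ^ 2, xL 0 * xL 1, xL 1 ^ 2, xL 0 * xL 2, xL 1 * xL 2, xL 2 ^ 2] c)
      (fun r' =>
        ![1, dL (cpl i r'), dL (cpl i r') ^ 2, dL (cpl i r') ^ 3,
          dL (cpl i r') ^ 4, dL (cpl i r') ^ 6] c)
      r)

/-- The realization map: its kernel is the (saturated) Cox ideal of `X`. -/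
def phiC : MvPolynomial CVar KK →ₐ[KK] LF :=
  aeval fun v => match v with
    | Sum.inl i => tL i
    | Sum.inr (Sum.inl s) =>
        ellL s.val.inf s.val.sup /
          ((dL s.val.sup - dL s.val.inf) * (tL s.val.inf * tL s.val.sup))
    | Sum.inr (Sum.inr i) => conicL i / ∏ m ∈ Finset.univ.erase i, tL m

/-- The `ℤ⁷`-multidegree (Picard grading) of the 27 variables. -/
def picDeg : CVar → Fin 7 → ℤ
  | Sum.inl i => Pi.single i.succ 1
  | Sum.inr (Sum.inl s) =>
      Pi.single 0 1 - Pi.single (Fin.succ s.val.inf) 1 -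
        Pi.single (Fin.succ s.val.sup) 1
  | Sum.inr (Sum.inr i) =>
      (Pi.single 0 2 + Pi.single i.succ 1) - ∑ j : Fin 6, Pi.single (Fin.succ j) 1

/-- The `ℤ⁷`-multidegree of a monomial (exponent vector). -/
def picDegM (m : CVar →₀ ℕ) : Fin 7 → ℤ :=
  ∑ v ∈ m.support, (m v : ℤ) • picDeg v

/-!
Indices run from `0` to `5`. Suitable multiples of the trinomials of `I_X` supported on
`{F₄₅G₅, F₂₄G₂, F₁₄G₁}`, `{E₅G₁, F₀₂F₃₄, E₁G₅}` and `{E₁F₁₄, E₀F₀₄, E₅F₄₅}` add up to a relation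
`e₀ E₅F₄₅G₅ + e₁ E₅F₂₄G₂ + e₂ E₀F₀₄G₅ + e₃ F₀₂F₁₄F₃₄ ∈ I_X` with `e₁ ≠ 0`, whose first monomial
has weight `1` and whose other monomials have weight `2`. If `e₀` were zero, then evaluating the
remaining three sections at the point `E₀ ∩ F₀₂` of the surface would give `e₁ = 0`: the last two
vanish there, and the first one does not when the parameters are generic. Hence the initial form
of the relation is `e₀ E₅F₄₅G₅`.

The three trinomials do occur among the generators: two disjoint lines are determined by their sum
in the Picard group, and two meeting lines have class `-K - w` for some line `w`. Each of these
27 classes has five reducible members, so there are at most `27 * 10 = 270` supports for a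
trinomial generator, and 270 generators with distinct supports exhaust them.
-/

section InitialForm

variable {σ : Type*}

lemma mWeight_add (w : σ → ℝ) (m m' : σ →₀ ℕ) :
    mWeight w (m + m') = mWeight w m + mWeight w m' :=
  Finsupp.sum_add_index' (by simp) (by intros; push_cast; ring)

lemma mWeight_single (w : σ → ℝ) (v : σ) (n : ℕ) :
    mWeight w (Finsupp.single v n) = w v * n :=
  Finsupp.sum_single_index (by simp)

lemma initialForm_monomial_add {R : Type*} [CommRing R] {w : σ → ℝ} {m : σ →₀ ℕ} {c : R}
    {g : MvPolynomial σ R} (hc : c ≠ 0)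
    (hg : g ∈ restrictSupport R {m' | mWeight w m < mWeight w m'}) :
    initialForm w (monomial m c + g) = monomial m c := by
  classical
  have coeff_g : g.coeff m = 0 :=
    notMem_support_iff.1 fun hm => lt_irrefl (mWeight w m) ((mem_restrictSupport_iff R).1 hg hm)
  have coeff_m : (monomial m c + g).coeff m = c := by simp [coeff_g]
  have hm : m ∈ (monomial m c + g).support := by rwa [mem_support_iff, coeff_m]
  have eq_or_lt : ∀ m' ∈ (monomial m c + g).support, m' = m ∨ mWeight w m < mWeight w m' :=
    fun m' hm' => (Finset.mem_union.1 (support_add hm')).imp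
      (fun h => Finset.mem_singleton.1 (support_monomial_subset h))
      (fun h => (mem_restrictSupport_iff R).1 hg h)
  have minimal_terms : (monomial m c + g).support.filter
      (fun m' => ∀ m'' ∈ (monomial m c + g).support, mWeight w m' ≤ mWeight w m'') = {m} := by
    refine Finset.eq_singleton_iff_unique_mem.2 ⟨Finset.mem_filter.2 ⟨hm, fun m' hm' => ?_⟩, ?_⟩
    · rcases eq_or_lt m' hm' with rfl | hlt
      exacts [le_rfl, hlt.le]
    · intro m' hm'
      obtain ⟨hm', hmin⟩ := Finset.mem_filter.1 hm'
      exact (eq_or_lt m' hm').resolve_right (hmin m hm).not_gt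
  rw [initialForm, minimal_terms, Finset.sum_singleton, coeff_m]

lemma monomial_one_mem_initialIdeal {K : Type*} [Field K] {w : σ → ℝ}
    {I : Ideal (MvPolynomial σ K)} {m : σ →₀ ℕ} {c : K} {g : MvPolynomial σ K} (hc : c ≠ 0)
    (hg : g ∈ restrictSupport K {m' | mWeight w m < mWeight w m'})
    (hI : monomial m c + g ∈ I) : monomial m 1 ∈ initialIdeal w I := by
  have hinit := initialForm_monomial_add hc hg
  have hne : monomial m c + g ≠ 0 := by
    intro h0
    rw [h0] at hinit
    exact hc (monomial_eq_zero.1 (by rw [← hinit]; simp [initialForm]))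
  have hmem : monomial m c ∈ initialIdeal w I := Ideal.subset_span ⟨_, hI, hne, hinit.symm⟩
  simpa [C_mul_monomial, hc] using Ideal.mul_mem_left _ (C c⁻¹) hmem

end InitialForm

/-- The quadratic monomial `u v`, as an exponent vector. -/
def pairMonomial {σ : Type*} (u v : σ) : σ →₀ ℕ := Finsupp.single u 1 + Finsupp.single v 1

/-- The exponent vector of the cubic monomial `u v z`. -/
def tripleMonomial {σ : Type*} (u v z : σ) : σ →₀ ℕ :=
  Finsupp.single u 1 + Finsupp.single v 1 + Finsupp.single z 1

section Monomials

variable {σ : Type*}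

lemma pairMonomial_comm (u v : σ) : pairMonomial u v = pairMonomial v u := add_comm _ _

lemma pairMonomial_ne {u v u' v' : σ} (h : u ≠ u') (h' : u ≠ v') :
    pairMonomial u v ≠ pairMonomial u' v' := by
  classical
  intro heq
  have := DFunLike.congr_fun heq u
  simp [pairMonomial, Finsupp.single_apply, h.symm, h'.symm] at this

lemma monomial_pairMonomial {R : Type*} [CommSemiring R] (u v : σ) (a : R) :
    monomial (pairMonomial u v) a = C a * (X u * X v) := by
  simp [X, pairMonomial, C_mul_monomial, monomial_mul]

lemma monomial_tripleMonomial {R : Type*} [CommSemiring R] (u v z : σ) (a : R) :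
    monomial (tripleMonomial u v z) a = C a * (X u * X v * X z) := by
  simp [X, tripleMonomial, C_mul_monomial, monomial_mul]

lemma mWeight_tripleMonomial (w : σ → ℝ) (u v z : σ) :
    mWeight w (tripleMonomial u v z) = w u + w v + w z := by
  simp [tripleMonomial, mWeight_add, mWeight_single]

lemma eq_trinomial_of_support_eq {R : Type*} [CommSemiring R] [DecidableEq σ]
    {g : MvPolynomial σ R} {m₁ m₂ m₃ : σ →₀ ℕ}
    (h₁₂ : m₁ ≠ m₂) (h₁₃ : m₁ ≠ m₃) (h₂₃ : m₂ ≠ m₃) (hg : g.support = {m₁, m₂, m₃}) :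
    g = monomial m₁ (g.coeff m₁) + monomial m₂ (g.coeff m₂) + monomial m₃ (g.coeff m₃) := by
  conv_lhs => rw [← support_sum_monomial_coeff g, hg]
  rw [Finset.sum_insert (by simp [h₁₂, h₁₃]), Finset.sum_insert (by simp [h₂₃]),
    Finset.sum_singleton, add_assoc]

end Monomials

instance : DecidableEq CVar :=
  inferInstanceAs (DecidableEq (Fin 6 ⊕ ({s : Sym2 (Fin 6) // ¬ s.IsDiag} ⊕ Fin 6)))

instance : Fintype CVar :=
  inferInstanceAs (Fintype (Fin 6 ⊕ ({s : Sym2 (Fin 6) // ¬ s.IsDiag} ⊕ Fin 6)))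

namespace CVar

/-- The index of the variable `E_i`. -/
def E (i : Fin 6) : CVar := Sum.inl i

/-- The index of the variable `F_{ij}`. -/
def F (i j : Fin 6) (h : i ≠ j := by decide) : CVar :=
  Sum.inr (Sum.inl ⟨s(i, j), Sym2.mk_isDiag_iff.not.2 h⟩)

/-- The index of the variable `G_i`. -/
def G (i : Fin 6) : CVar := Sum.inr (Sum.inr i)

end CVar

lemma X_E (i : Fin 6) : (X (CVar.E i) : MvPolynomial CVar KK) = Ev i := rfl

lemma X_F {i j : Fin 6} (h : i ≠ j) : (X (CVar.F i j h) : MvPolynomial CVar KK) = Fv i j := by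
  rw [Fv, dif_pos (Sym2.mk_isDiag_iff.not.2 h)]
  rfl

lemma X_G (i : Fin 6) : (X (CVar.G i) : MvPolynomial CVar KK) = Gv i := rfl

/-- The intersection form of signature `(1, 6)` on the Picard lattice `ℤ⁷` of the cubic surface. -/
def interForm (a b : Fin 7 → ℤ) : ℤ := a 0 * b 0 - ∑ i : Fin 6, a i.succ * b i.succ

/-- The anticanonical class `-K = 3e₀ - e₁ - ⋯ - e₆`. -/
def anticanonical : Fin 7 → ℤ := Fin.cons 3 fun _ => -1

lemma interForm_add_right (a b c : Fin 7 → ℤ) :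
    interForm a (b + c) = interForm a b + interForm a c := by
  simp only [interForm, Pi.add_apply, mul_add, Finset.sum_add_distrib]
  ring

lemma interForm_picDeg_eq_neg_one_iff :
    ∀ u v : CVar, interForm (picDeg u) (picDeg v) = -1 ↔ u = v := by
  decide +kernel

lemma interForm_picDeg_of_ne : ∀ u v : CVar, u ≠ v →
    interForm (picDeg u) (picDeg v) = 0 ∨ interForm (picDeg u) (picDeg v) = 1 := by
  decide +kernel

lemma picDeg_injective : Function.Injective picDeg := fun u v h =>
  (interForm_picDeg_eq_neg_one_iff u v).1 (h ▸ (interForm_picDeg_eq_neg_one_iff u u).2 rfl)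

/-- The ordered pairs of lines forming a reducible member of the conic bundle class
`-K - picDeg w`. -/
def conicBundlePairs (w : CVar) : Finset (CVar × CVar) :=
  {p | p.1 ≠ p.2 ∧ picDeg p.1 + picDeg p.2 + picDeg w = anticanonical}

lemma exists_tritangent : ∀ u v : CVar, interForm (picDeg u) (picDeg v) = 1 →
    ∃ w, picDeg u + picDeg v + picDeg w = anticanonical := by
  decide +kernel

lemma card_conicBundlePairs : ∀ w, (conicBundlePairs w).card = 10 := by
  decide +kernel

lemma picDegM_pairMonomial {u v : CVar} (h : u ≠ v) :
    picDegM (pairMonomial u v) = picDeg u + picDeg v := by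
  have hsupp : (pairMonomial u v).support = {u, v} :=
    Finsupp.support_single_add_single h one_ne_zero one_ne_zero
  rw [picDegM, hsupp, Finset.sum_pair h]
  simp [pairMonomial, h, h.symm]

/-- The quadratic monomials cutting out the reducible members of the conic bundle class
`-K - picDeg w`. -/
def conicBundleMonomials (w : CVar) : Finset (CVar →₀ ℕ) :=
  open Classical in (conicBundlePairs w).image fun p => pairMonomial p.1 p.2

-- Each reducible member is counted by two ordered pairs of lines.
lemma card_conicBundleMonomials_le (w : CVar) : (conicBundleMonomials w).card ≤ 5 := by
  classical
  have two_le_card_fiber : ∀ m ∈ conicBundleMonomials w,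
      2 ≤ ((conicBundlePairs w).filter fun p => pairMonomial p.1 p.2 = m).card := by
    intro m hm
    obtain ⟨p, hp, rfl⟩ := Finset.mem_image.1 hm
    obtain ⟨hne, hsum⟩ := (Finset.mem_filter.1 hp).2
    refine Finset.one_lt_card.2 ⟨p, by simp [hp], p.swap, ?_, fun h => hne (congrArg Prod.fst h)⟩
    simp [conicBundlePairs, pairMonomial_comm, hne.symm, add_comm (picDeg p.2), hsum]
  have := Finset.mul_card_image_le_card (conicBundlePairs w) 2 two_le_card_fiber
  rw [card_conicBundlePairs] at this
  change 2 * (conicBundleMonomials w).card ≤ 10 at this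
  omega

lemma eq_of_picDeg_add_eq {u v v' : CVar} (h : picDeg u + picDeg v = picDeg u + picDeg v') :
    v = v' :=
  picDeg_injective (add_left_cancel h)

-- If `u · v = 0` then `u · (u' + v') = u · (u + v) = -1`, so `u` must be `u'` or `v'`.
lemma pairMonomial_eq_of_interForm_eq_zero {u v u' v' : CVar}
    (huv : interForm (picDeg u) (picDeg v) = 0)
    (h : picDeg u + picDeg v = picDeg u' + picDeg v') :
    pairMonomial u v = pairMonomial u' v' := by
  have key : interForm (picDeg u) (picDeg u') + interForm (picDeg u) (picDeg v') = -1 := by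
    rw [← interForm_add_right, ← h, interForm_add_right, huv,
      (interForm_picDeg_eq_neg_one_iff u u).2 rfl, add_zero]
  rcases eq_or_ne u u' with rfl | hu'
  · rw [eq_of_picDeg_add_eq h]
  rcases eq_or_ne u v' with rfl | hv'
  · rw [eq_of_picDeg_add_eq (h.trans (add_comm _ _)), pairMonomial_comm]
  have := interForm_picDeg_of_ne u u' hu'
  have := interForm_picDeg_of_ne u v' hv'
  omega

/-- The possible supports of the trinomial generators of the Cox ideal: three products of two
distinct variables having the same Picard degree. -/
structure IsConicTriple (S : Finset (CVar →₀ ℕ)) : Prop where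
  card_eq : S.card = 3
  exists_pair : ∀ m ∈ S, ∃ u v : CVar, u ≠ v ∧ m = pairMonomial u v
  picDegM_eq : ∀ m ∈ S, ∀ m' ∈ S, picDegM m = picDegM m'

lemma IsConicTriple.exists_subset_conicBundleMonomials {S : Finset (CVar →₀ ℕ)}
    (hS : IsConicTriple S) : ∃ w, S ⊆ conicBundleMonomials w := by
  classical
  obtain ⟨m, hm, m', hm', hne⟩ := Finset.one_lt_card.1 (by rw [hS.card_eq]; norm_num : 1 < S.card)
  obtain ⟨u, v, huv, rfl⟩ := hS.exists_pair m hm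
  obtain ⟨u', v', huv', rfl⟩ := hS.exists_pair m' hm'
  have hdeg := hS.picDegM_eq _ hm _ hm'
  rw [picDegM_pairMonomial huv, picDegM_pairMonomial huv'] at hdeg
  have meet : interForm (picDeg u) (picDeg v) = 1 :=
    (interForm_picDeg_of_ne u v huv).resolve_left
      fun h0 => hne (pairMonomial_eq_of_interForm_eq_zero h0 hdeg)
  obtain ⟨w, hw⟩ := exists_tritangent u v meet
  refine ⟨w, fun n hn => ?_⟩
  obtain ⟨x, y, hxy, rfl⟩ := hS.exists_pair n hn
  have hdeg' := hS.picDegM_eq _ hn _ hm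
  rw [picDegM_pairMonomial hxy, picDegM_pairMonomial huv] at hdeg'
  exact Finset.mem_image.2 ⟨(x, y), by simp [conicBundlePairs, hxy, hdeg', hw], rfl⟩

/-- All subsets of three reducible members of one of the 27 conic bundle classes. -/
def conicTriples : Finset (Finset (CVar →₀ ℕ)) :=
  open Classical in Finset.univ.biUnion fun w => (conicBundleMonomials w).powersetCard 3

lemma card_conicTriples_le : conicTriples.card ≤ 270 := by
  classical
  refine (Finset.card_biUnion_le_card_mul Finset.univ _ 10 fun w _ => ?_).trans ?_
  · rw [Finset.card_powersetCard]
    exact Nat.choose_le_choose 3 (card_conicBundleMonomials_le w)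
  · have : Fintype.card CVar = 27 := by decide +kernel
    rw [Finset.card_univ, this]

lemma IsConicTriple.mem_conicTriples {S : Finset (CVar →₀ ℕ)} (hS : IsConicTriple S) :
    S ∈ conicTriples := by
  classical
  obtain ⟨w, hw⟩ := hS.exists_subset_conicBundleMonomials
  exact Finset.mem_biUnion.2 ⟨w, Finset.mem_univ w, Finset.mem_powersetCard.2 ⟨hw, hS.card_eq⟩⟩

section Generators

variable {R : Type*} [CommRing R] {G : Finset (MvPolynomial CVar R)}

lemma exists_mem_support_eq (hcard : 270 ≤ G.card) (htriple : ∀ g ∈ G, IsConicTriple g.support)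
    (hinj : Set.InjOn (fun g : MvPolynomial CVar R => g.support) G)
    {S : Finset (CVar →₀ ℕ)} (hS : IsConicTriple S) : ∃ g ∈ G, g.support = S := by
  classical
  have supports_eq : G.image (fun g => g.support) = conicTriples := by
    refine Finset.eq_of_subset_of_card_le
      (Finset.image_subset_iff.2 fun g hg => (htriple g hg).mem_conicTriples) ?_
    rw [Finset.card_image_of_injOn hinj]
    exact card_conicTriples_le.trans hcard
  exact Finset.mem_image.1 (supports_eq ▸ hS.mem_conicTriples)

lemma exists_trinomial_mem_span (hcard : 270 ≤ G.card)
    (htriple : ∀ g ∈ G, IsConicTriple g.support)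
    (hinj : Set.InjOn (fun g : MvPolynomial CVar R => g.support) G)
    {u₁ v₁ u₂ v₂ u₃ v₃ : CVar} (hnodup : [u₁, v₁, u₂, v₂, u₃, v₃].Nodup)
    (h₁₂ : picDeg u₁ + picDeg v₁ = picDeg u₂ + picDeg v₂)
    (h₂₃ : picDeg u₂ + picDeg v₂ = picDeg u₃ + picDeg v₃) :
    ∃ a b c : R, a ≠ 0 ∧ b ≠ 0 ∧ c ≠ 0 ∧
      C a * (X u₁ * X v₁) + C b * (X u₂ * X v₂) + C c * (X u₃ * X v₃) ∈
        Ideal.span (G : Set (MvPolynomial CVar R)) := by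
  classical
  simp only [List.nodup_cons, List.mem_cons, not_or] at hnodup
  obtain ⟨⟨uv₁, u₁_ne_u₂, u₁_ne_v₂, u₁_ne_u₃, u₁_ne_v₃, -⟩, -,
    ⟨uv₂, u₂_ne_u₃, u₂_ne_v₃, -⟩, -, ⟨uv₃, -⟩, -⟩ := hnodup
  have m₁₂ : pairMonomial u₁ v₁ ≠ pairMonomial u₂ v₂ := pairMonomial_ne u₁_ne_u₂ u₁_ne_v₂
  have m₁₃ : pairMonomial u₁ v₁ ≠ pairMonomial u₃ v₃ := pairMonomial_ne u₁_ne_u₃ u₁_ne_v₃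
  have m₂₃ : pairMonomial u₂ v₂ ≠ pairMonomial u₃ v₃ := pairMonomial_ne u₂_ne_u₃ u₂_ne_v₃
  have hS : IsConicTriple {pairMonomial u₁ v₁, pairMonomial u₂ v₂, pairMonomial u₃ v₃} := by
    refine ⟨Finset.card_eq_three.2 ⟨_, _, _, m₁₂, m₁₃, m₂₃, rfl⟩, ?_, ?_⟩
    · simp only [Finset.mem_insert, Finset.mem_singleton]
      rintro _ (rfl | rfl | rfl)
      exacts [⟨u₁, v₁, uv₁, rfl⟩, ⟨u₂, v₂, uv₂, rfl⟩, ⟨u₃, v₃, uv₃, rfl⟩]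
    · simp [picDegM_pairMonomial, uv₁, uv₂, uv₃, h₁₂, h₂₃]
  obtain ⟨g, hg, hsupp⟩ := exists_mem_support_eq hcard htriple hinj hS
  refine ⟨g.coeff (pairMonomial u₁ v₁), g.coeff (pairMonomial u₂ v₂),
    g.coeff (pairMonomial u₃ v₃), ?_, ?_, ?_, ?_⟩
  iterate 3 simp [← mem_support_iff, hsupp]
  simp only [← monomial_pairMonomial]
  rw [← eq_trinomial_of_support_eq m₁₂ m₁₃ m₂₃ hsupp]
  exact Ideal.subset_span hg

end Generators

section PlaneForms

variable {A B : Type*} [CommRing A] [CommRing B]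

/-- The point `(1 : a : a³)` of the cuspidal cubic. -/
def cuspPoint (a : A) : Fin 3 → A := ![1, a, a ^ 3]

/-- The equation of the line through `cuspPoint a` and `cuspPoint b`. -/
def lineForm (a b : A) (x : Fin 3 → A) : A :=
  Matrix.det !![x 0, x 1, x 2; 1, a, a ^ 3; 1, b, b ^ 3]

/-- The equation of the conic through the five points `cuspPoint (s r)`, in the shape used by
`conicL`. -/
def conicForm (s : Fin 5 → A) (x : Fin 3 → A) : A :=
  Matrix.det (Matrix.of fun r c : Fin 6 =>
    Fin.cases (![x 0 ^ 2, x 0 * x 1, x 1 ^ 2, x 0 * x 2, x 1 * x 2, x 2 ^ 2] c)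
      (fun r' => ![1, s r', s r' ^ 2, s r' ^ 3, s r' ^ 4, s r' ^ 6] c) r)

lemma map_lineForm (f : A →+* B) (a b : A) (x : Fin 3 → A) :
    f (lineForm a b x) = lineForm (f a) (f b) (f ∘ x) := by
  simp [lineForm, Matrix.det_fin_three]

lemma map_conicForm (f : A →+* B) (s : Fin 5 → A) (x : Fin 3 → A) :
    f (conicForm s x) = conicForm (f ∘ s) (f ∘ x) := by
  rw [conicForm, RingHom.map_det]
  congr 1
  ext r c
  refine Fin.cases ?_ (fun r' => ?_) r <;> fin_cases c <;> simp

lemma map_cuspPoint (f : A →+* B) (a : A) : f ∘ cuspPoint a = cuspPoint (f a) := by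
  ext i
  fin_cases i <;> simp [cuspPoint]

lemma lineForm_add (a b : A) (x y : Fin 3 → A) :
    lineForm a b (x + y) = lineForm a b x + lineForm a b y := by
  simp only [lineForm, Matrix.det_fin_three, Pi.add_apply, Matrix.of_apply, Matrix.cons_val]
  ring

lemma lineForm_sub (a b : A) (x y : Fin 3 → A) :
    lineForm a b (x - y) = lineForm a b x - lineForm a b y := by
  simp only [lineForm, Matrix.det_fin_three, Pi.sub_apply, Matrix.of_apply, Matrix.cons_val]
  ring

@[simp]
lemma lineForm_cuspPoint_left (a b : A) : lineForm a b (cuspPoint a) = 0 :=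
  Matrix.det_zero_of_row_eq (i := 0) (j := 1) (by decide) rfl

@[simp]
lemma lineForm_cuspPoint_right (a b : A) : lineForm a b (cuspPoint b) = 0 :=
  Matrix.det_zero_of_row_eq (i := 0) (j := 2) (by decide) rfl

lemma conicForm_cuspPoint (s : Fin 5 → A) (r : Fin 5) : conicForm s (cuspPoint (s r)) = 0 := by
  refine Matrix.det_zero_of_row_eq (Fin.succ_ne_zero r).symm (funext fun c => ?_)
  fin_cases c <;> simp [cuspPoint, ← pow_mul, ← pow_succ']

lemma exists_conicForm_eq (s : Fin 5 → A) : ∃ q : Fin 6 → A, ∀ x : Fin 3 → A,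
    conicForm s x = q 0 * x 0 ^ 2 + q 1 * (x 0 * x 1) + q 2 * x 1 ^ 2 +
      q 3 * (x 0 * x 2) + q 4 * (x 1 * x 2) + q 5 * x 2 ^ 2 := by
  refine ⟨fun c => (-1) ^ (c : ℕ) * Matrix.det (Matrix.of fun r c' : Fin 5 =>
    ![1, s r, s r ^ 2, s r ^ 3, s r ^ 4, s r ^ 6] (c.succAbove c')), fun x => ?_⟩
  rw [conicForm, Matrix.det_succ_row_zero, Fin.sum_univ_six]
  simp only [Matrix.of_apply, Fin.cases_zero, mul_right_comm _ _ (Matrix.det _)]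
  rfl

lemma conicForm_add_add_conicForm_sub (s : Fin 5 → A) (x y : Fin 3 → A) :
    conicForm s (x + y) + conicForm s (x - y) = 2 * (conicForm s x + conicForm s y) := by
  obtain ⟨q, hq⟩ := exists_conicForm_eq s
  simp only [hq, Pi.add_apply, Pi.sub_apply]
  ring

/-- Vanishes iff the tangent at `p₀` to the conic through the points `p_m`, `m ≠ 2`, passes through
`p₂`, or `p₀` lies on the line through `p₂` and `p₄`, where `p_m` is the point `cuspPoint (d m)`. -/
def tangencyForm (d : Fin 6 → A) : A :=
  let p := fun i => cuspPoint (d i)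
  lineForm (d 2) (d 4) (p 0) *
    (conicForm (d ∘ Fin.succAbove 2) (p 0 + p 2) - conicForm (d ∘ Fin.succAbove 2) (p 0 - p 2))

lemma map_tangencyForm (f : A →+* B) (d : Fin 6 → A) :
    f (tangencyForm d) = tangencyForm (f ∘ d) := by
  have comp_add (x y : Fin 3 → A) : f ∘ (x + y) = f ∘ x + f ∘ y := funext fun _ => f.map_add _ _
  have comp_sub (x y : Fin 3 → A) : f ∘ (x - y) = f ∘ x - f ∘ y := funext fun _ => f.map_sub _ _
  simp only [tangencyForm, RingHom.map_mul, RingHom.map_sub, map_lineForm, map_conicForm, comp_add,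
    comp_sub, map_cuspPoint]
  rfl

lemma mul_tangencyForm_eq_zero {d : Fin 6 → A} {a b c : A}
    (h : ∀ x : Fin 3 → A,
      a * (lineForm (d 2) (d 4) x * conicForm (d ∘ Fin.succAbove 2) x) +
      b * (lineForm (d 0) (d 4) x * conicForm (d ∘ Fin.succAbove 5) x) +
      c * (lineForm (d 0) (d 2) x * lineForm (d 1) (d 4) x * lineForm (d 3) (d 4) x) = 0) :
    a * tangencyForm d = 0 := by
  have conic_zero : conicForm (d ∘ Fin.succAbove 5) (cuspPoint (d 0)) = 0 :=
    conicForm_cuspPoint (d ∘ Fin.succAbove 5) 0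
  have conic_two : conicForm (d ∘ Fin.succAbove 5) (cuspPoint (d 2)) = 0 :=
    conicForm_cuspPoint (d ∘ Fin.succAbove 5) 2
  have parallelogram := conicForm_add_add_conicForm_sub (d ∘ Fin.succAbove 5)
    (cuspPoint (d 0)) (cuspPoint (d 2))
  have h_add := h (cuspPoint (d 0) + cuspPoint (d 2))
  have h_sub := h (cuspPoint (d 0) - cuspPoint (d 2))
  simp only [lineForm_add, lineForm_sub, lineForm_cuspPoint_left, lineForm_cuspPoint_right,
    conic_zero, conic_two] at h_add h_sub parallelogram
  simp only [tangencyForm]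
  linear_combination h_add - h_sub - b * lineForm (d 0) (d 4) (cuspPoint (d 2)) * parallelogram

lemma tangencyForm_intCast_ne_zero : tangencyForm (fun i : Fin 6 => (i.val : ℤ)) ≠ 0 := by
  decide +kernel

end PlaneForms

lemma tangencyForm_dK_ne_zero : tangencyForm dK ≠ 0 := by
  have generic : tangencyForm (X : Fin 6 → MvPolynomial (Fin 6) ℚ) ≠ 0 := by
    intro h
    have h0 := congrArg (eval fun i : Fin 6 => (i.val : ℚ)) h
    have specialize : eval (fun i : Fin 6 => (i.val : ℚ)) ∘ X =
        Int.castRingHom ℚ ∘ fun i : Fin 6 => (i.val : ℤ) := by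
      ext i
      simp
    rw [map_tangencyForm, specialize, ← map_tangencyForm, map_zero] at h0
    exact tangencyForm_intCast_ne_zero ((map_eq_zero_iff _ (Int.castRingHom ℚ).injective_int).1 h0)
  have : tangencyForm dK = algebraMap (MvPolynomial (Fin 6) ℚ) KK (tangencyForm X) :=
    (map_tangencyForm _ _).symm
  rw [this]
  exact (map_ne_zero_iff _ (IsFractionRing.injective _ _)).2 generic

lemma ellL_eq_lineForm (i j : Fin 6) : ellL i j = lineForm (dL i) (dL j) xL := rfl

lemma cpl_eq_succAbove (i : Fin 6) : cpl i = i.succAbove :=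
  (Finset.orderEmbOfFin_unique (s := Finset.univ.erase i) (by simp)
    (fun r => by simp [Fin.succAbove_ne]) (Fin.strictMono_succAbove i)).symm

lemma conicL_eq_conicForm (i : Fin 6) : conicL i = conicForm (dL ∘ i.succAbove) xL := by
  rw [← cpl_eq_succAbove]
  rfl

lemma dK_injective : Function.Injective dK :=
  (IsFractionRing.injective _ _).comp (X_injective (σ := Fin 6) (R := ℚ))

lemma dL_injective : Function.Injective dL :=
  (algebraMap KK LF).injective.comp dK_injective

lemma tL_ne_zero (i : Fin 6) : tL i ≠ 0 :=
  (map_ne_zero_iff _ (IsFractionRing.injective SRing LF)).2 (X_ne_zero _)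

lemma phiC_Ev (i : Fin 6) : phiC (Ev i) = tL i := aeval_X _ _

lemma phiC_Fv {i j : Fin 6} (h : i < j) :
    phiC (Fv i j) = lineForm (dL i) (dL j) xL / ((dL j - dL i) * (tL i * tL j)) := by
  rw [Fv, dif_pos (Sym2.mk_isDiag_iff.not.2 h.ne)]
  refine (aeval_X _ _).trans ?_
  simp [h.le, ellL_eq_lineForm]

lemma phiC_Gv (i : Fin 6) :
    phiC (Gv i) = conicForm (dL ∘ i.succAbove) xL * tL i / ∏ m, tL m := by
  have : phiC (Gv i) = conicL i / ∏ m ∈ Finset.univ.erase i, tL m := aeval_X _ _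
  rw [this, conicL_eq_conicForm, ← Finset.prod_erase_mul _ _ (Finset.mem_univ i),
    mul_div_mul_right _ _ (tL_ne_zero i)]

lemma phiC_C (a : KK) : phiC (C a) = algebraMap KK LF a := phiC.commutes a

lemma mul_tangencyForm_dK_eq_zero {a b c : KK}
    (h : algebraMap KK LF a * (lineForm (dL 2) (dL 4) xL * conicForm (dL ∘ Fin.succAbove 2) xL) +
      algebraMap KK LF b * (lineForm (dL 0) (dL 4) xL * conicForm (dL ∘ Fin.succAbove 5) xL) +
      algebraMap KK LF c * (lineForm (dL 0) (dL 2) xL * lineForm (dL 1) (dL 4) xL *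
        lineForm (dL 3) (dL 4) xL) = 0) :
    a * tangencyForm dK = 0 := by
  let x : Fin 3 → SRing := fun i => X (i.castLE (by omega))
  let d : Fin 6 → SRing := C ∘ dK
  have hpoly : C a * (lineForm (d 2) (d 4) x * conicForm (d ∘ Fin.succAbove 2) x) +
      C b * (lineForm (d 0) (d 4) x * conicForm (d ∘ Fin.succAbove 5) x) +
      C c * (lineForm (d 0) (d 2) x * lineForm (d 1) (d 4) x * lineForm (d 3) (d 4) x) = 0 := by
    apply IsFractionRing.injective SRing LF
    simp only [map_zero, map_add, map_mul, map_lineForm, map_conicForm]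
    exact h
  refine mul_tangencyForm_eq_zero (b := b) (c := c) fun P => ?_
  have hx : eval (Fin.append P (0 : Fin 6 → KK)) ∘ x = P := funext fun i =>
    (eval_X _).trans (Fin.append_left P 0 i)
  have hd : eval (Fin.append P (0 : Fin 6 → KK)) ∘ d = dK := funext fun i => eval_C _
  have hP := congrArg (eval (Fin.append P (0 : Fin 6 → KK))) hpoly
  simpa only [map_zero, map_add, map_mul, map_lineForm, map_conicForm, eval_C, hx,
    ← Function.comp_assoc, hd, ← Function.comp_apply (f := eval _) (g := d)] using hP

-- At the point `E₀ ∩ F₀₂` of the surface the last two sections vanish and the first one does not.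
lemma eq_zero_of_phiC_eq_zero {a b c : KK}
    (h : phiC (C a * (Ev 5 * Fv 2 4 * Gv 2) + C b * (Ev 0 * Fv 0 4 * Gv 5) +
      C c * (Fv 0 2 * Fv 1 4 * Fv 3 4)) = 0) : a = 0 := by
  have t_ne := tL_ne_zero
  have d_ne (i j : Fin 6) (hij : i ≠ j := by decide) : dL i - dL j ≠ 0 :=
    sub_ne_zero.2 (dL_injective.ne hij)
  have d42 := d_ne 4 2
  have d40 := d_ne 4 0
  have d41 := d_ne 4 1
  have d43 := d_ne 4 3
  have d20 := d_ne 2 0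
  have algebraMap_dK (i : Fin 6) : algebraMap KK LF (dK i) = dL i := rfl
  have hmul : a / (dK 4 - dK 2) * tangencyForm dK = 0 := by
    refine mul_tangencyForm_dK_eq_zero (b := b / (dK 4 - dK 0))
      (c := c / ((dK 2 - dK 0) * (dK 4 - dK 1) * (dK 4 - dK 3))) ?_
    simp only [map_div₀, map_mul, map_sub, algebraMap_dK]
    have factor := congrArg (· * (tL 4 * (∏ m, tL m) / tL 5)) h
    simp only [map_add, map_mul, phiC_C, phiC_Ev, phiC_Gv, phiC_Fv (by decide : (2 : Fin 6) < 4),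
      phiC_Fv (by decide : (0 : Fin 6) < 4), phiC_Fv (by decide : (0 : Fin 6) < 2),
      phiC_Fv (by decide : (1 : Fin 6) < 4), phiC_Fv (by decide : (3 : Fin 6) < 4),
      Fin.prod_univ_six, zero_mul] at factor
    rw [← factor]
    field_simp [t_ne]
  have := (mul_eq_zero.1 hmul).resolve_right tangencyForm_dK_ne_zero
  exact (div_eq_zero_iff.1 this).resolve_right (sub_ne_zero.2 (dK_injective.ne (by decide)))

section Elimination

variable {I : Ideal (MvPolynomial CVar KK)} {a₁ a₂ a₃ b₁ b₂ b₃ c₁ c₂ c₃ : KK}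

-- The terms `E₅F₁₄G₁` and `E₁F₁₄G₅` cancel in `b₁c₁E₅ • A - a₃c₁F₁₄ • B + a₃b₃G₅ • D`,
-- where `A`, `B`, `D` are the three trinomials.
lemma exists_tetranomial_mem (ha₂ : a₂ ≠ 0) (hb₁ : b₁ ≠ 0) (hc₁ : c₁ ≠ 0)
    (hA : C a₁ * (Fv 4 5 * Gv 5) + C a₂ * (Fv 2 4 * Gv 2) + C a₃ * (Fv 1 4 * Gv 1) ∈ I)
    (hB : C b₁ * (Ev 5 * Gv 1) + C b₂ * (Fv 0 2 * Fv 3 4) + C b₃ * (Ev 1 * Gv 5) ∈ I)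
    (hD : C c₁ * (Ev 1 * Fv 1 4) + C c₂ * (Ev 0 * Fv 0 4) + C c₃ * (Ev 5 * Fv 4 5) ∈ I) :
    ∃ e₀ e₁ e₂ e₃ : KK, e₁ ≠ 0 ∧ C e₀ * (Ev 5 * Fv 4 5 * Gv 5) +
      (C e₁ * (Ev 5 * Fv 2 4 * Gv 2) + C e₂ * (Ev 0 * Fv 0 4 * Gv 5) +
        C e₃ * (Fv 0 2 * Fv 1 4 * Fv 3 4)) ∈ I := by
  refine ⟨b₁ * c₁ * a₁ + a₃ * b₃ * c₃, b₁ * c₁ * a₂, a₃ * b₃ * c₂, -(a₃ * c₁ * b₂),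
    mul_ne_zero (mul_ne_zero hb₁ hc₁) ha₂, ?_⟩
  have combination := I.add_mem
    (I.sub_mem (I.mul_mem_left (C (b₁ * c₁) * Ev 5) hA) (I.mul_mem_left (C (a₃ * c₁) * Fv 1 4) hB))
    (I.mul_mem_left (C (a₃ * b₃) * Gv 5) hD)
  convert combination using 1
  simp only [map_mul, map_add, map_neg]
  ring

lemma mem_initialIdeal_of_tetranomial_mem {e₀ e₁ e₂ e₃ : KK} (he₀ : e₀ ≠ 0)
    (h : C e₀ * (Ev 5 * Fv 4 5 * Gv 5) + (C e₁ * (Ev 5 * Fv 2 4 * Gv 2) +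
      C e₂ * (Ev 0 * Fv 0 4 * Gv 5) + C e₃ * (Fv 0 2 * Fv 1 4 * Fv 3 4)) ∈ I) :
    Ev 5 * Fv 4 5 * Gv 5 ∈ initialIdeal wCox I := by
  have hE (i) : wCox (.E i) = ![2, 1, 0, 1, 1, 1] i := rfl
  have hF {i j} (h : i ≠ j) : wCox (.F i j h) = if s(i, j) = s(0, 2) then 2
      else if s(i, j) = s(1, 2) ∨ s(i, j) = s(2, 3) ∨ s(i, j) = s(2, 4) ∨ s(i, j) = s(2, 5)
      then 1 else 0 := rfl
  have hG (i) : wCox (.G i) = 0 := rfl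
  simp only [← X_E, ← X_F (by decide : (4 : Fin 6) ≠ 5), ← X_F (by decide : (2 : Fin 6) ≠ 4),
    ← X_F (by decide : (0 : Fin 6) ≠ 4), ← X_F (by decide : (0 : Fin 6) ≠ 2),
    ← X_F (by decide : (1 : Fin 6) ≠ 4), ← X_F (by decide : (3 : Fin 6) ≠ 4), ← X_G,
    ← monomial_tripleMonomial] at h ⊢
  suffices monomial (tripleMonomial (.E 5) (.F 4 5) (.G 5)) 1 ∈ initialIdeal wCox I by
    simpa [monomial_tripleMonomial] using this
  refine monomial_one_mem_initialIdeal he₀ (add_mem (add_mem ?_ ?_) ?_) h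
  all_goals
    refine (monomial_mem_restrictSupport _).2 (Or.inl ?_)
    change mWeight wCox _ < mWeight wCox _
    simp [mWeight_tripleMonomial, hE, hF, hG]

end Elimination

/-- let `G` be the set of the 270 trinomial generators of the
Cox ideal `I_X` (the ten trinomials `T_{1,jkl}` together with their 260
translates under the Weyl group `W(E₆)`; these are pinned down, up to a
nonzero scalar on each generator, by the hypotheses below, which characterize
them as the 270 trinomial relations supported on three reducible members of a
conic bundle class).  Then the monomial `E₆·F₅₆·G₆` lies in the initial
ideal `in_w(I_X)` of the ideal `I_X` generated by `G`, for the weight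
vector `w` of the paper. -/
theorem stmt_6 (G : Finset (MvPolynomial CVar KK))
    (hcard : G.card = 270)
    (hbase : ∀ j k l : Fin 6, 0 < j → j < k → k < l → T 0 j k l ∈ G)
    (hker : ∀ g ∈ G, phiC g = 0)
    (hsupp : ∀ g ∈ G, g.support.card = 3)
    (hquad : ∀ g ∈ G, ∀ m ∈ g.support,
      ∃ u v : CVar, u ≠ v ∧ m = Finsupp.single u 1 + Finsupp.single v 1)
    (hdeg : ∀ g ∈ G, ∀ m ∈ g.support, ∀ m' ∈ g.support, picDegM m = picDegM m')
    (hdistinct : ∀ g ∈ G, ∀ g' ∈ G, g ≠ g' → g.support ≠ g'.support) :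
    Ev 5 * Fv 4 5 * Gv 5 ∈
      initialIdeal wCox (Ideal.span (G : Set (MvPolynomial CVar KK))) := by
  have htriple : ∀ g ∈ G, IsConicTriple g.support := fun g hg =>
    ⟨hsupp g hg, hquad g hg, hdeg g hg⟩
  have hinj : Set.InjOn (fun g : MvPolynomial CVar KK => g.support) G := fun g hg g' hg' h =>
    not_imp_comm.1 (hdistinct g hg g' hg') (not_not.2 h)
  have hle : Ideal.span (G : Set (MvPolynomial CVar KK)) ≤ RingHom.ker phiC :=
    Ideal.span_le.2 hker
  obtain ⟨a₁, a₂, a₃, -, ha₂, -, hA⟩ := exists_trinomial_mem_span hcard.ge htriple hinj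
    (u₁ := .F 4 5) (v₁ := .G 5) (u₂ := .F 2 4) (v₂ := .G 2) (u₃ := .F 1 4) (v₃ := .G 1)
    (by decide +kernel) (by decide +kernel) (by decide +kernel)
  obtain ⟨b₁, b₂, b₃, hb₁, -, -, hB⟩ := exists_trinomial_mem_span hcard.ge htriple hinj
    (u₁ := .E 5) (v₁ := .G 1) (u₂ := .F 0 2) (v₂ := .F 3 4) (u₃ := .E 1) (v₃ := .G 5)
    (by decide +kernel) (by decide +kernel) (by decide +kernel)
  obtain ⟨c₁, c₂, c₃, hc₁, -, -, hD⟩ := exists_trinomial_mem_span hcard.ge htriple hinj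
    (u₁ := .E 1) (v₁ := .F 1 4) (u₂ := .E 0) (v₂ := .F 0 4) (u₃ := .E 5) (v₃ := .F 4 5)
    (by decide +kernel) (by decide +kernel) (by decide +kernel)
  simp only [X_E, X_F, X_G] at hA hB hD
  obtain ⟨e₀, e₁, e₂, e₃, he₁, he⟩ := exists_tetranomial_mem ha₂ hb₁ hc₁ hA hB hD
  refine mem_initialIdeal_of_tetranomial_mem (fun he₀ => he₁ ?_) he
  exact eq_zero_of_phiC_eq_zero (by simpa [he₀] using RingHom.mem_ker.1 (hle he))

end
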